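/- Let V be a finite-dimensional real inner product space, let p ∈ V be any vector (possibly zero), and set t = ‖p‖²/2. Let a₁, a₂, a₃, b₁, b₂, b₃ be real numbers satisfying a₁a₂ = 1 + a₃² and (a₁ + 2tb₁)(a₂ + 2tb₂) = 1 + (a₃ + 2tb₃)². Define J : V × V → V × V by J(X, θ) = (−a₃X − b₃⟨p,X⟩p − a₂θ − b₂⟨p,θ⟩p, a₁X + b₁⟨p,X⟩p + a₃θ + b₃⟨p,θ⟩p). Then J ∘ J = −id. -/

import Mathlib

open scoped RealInnerProductSpace

/-!
Let `T X = ⟪p, X⟫ p` and `Aᵢ = aᵢ + bᵢ T`, so that `J` is the block operator with rows `(-A₃, -A₂)`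
and `(A₁, A₃)`. The `Aᵢ` commute, so `J² = -1` as soon as `A₁ A₂ = 1 + A₃²`. Since `T² = ‖p‖² T`,
the operator `Aᵢ` acts on `p^⊥` as `aᵢ` and on the line through `p` as `aᵢ + ‖p‖² bᵢ`; the two
coefficient relations are the equation `A₁ A₂ = 1 + A₃²` on these two eigenspaces.
-/

section BlockMap

variable {A M : Type*} [Ring A] [AddCommGroup M] [Module A M]

/-- The action on `M × M` of the trace-zero block matrix with rows `(-c, -b)` and `(a, c)`, whose
entries are scalars from a possibly noncommutative ring; endomorphisms of `M` are the intended
scalars. -/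
def traceZeroBlockMap (a b c : A) (z : M × M) : M × M :=
  (-(c • z.1) - b • z.2, a • z.1 + c • z.2)

theorem traceZeroBlockMap_traceZeroBlockMap {a b c : A} (hab : Commute a b) (hac : Commute a c)
    (hbc : Commute b c) (h : a * b = 1 + c ^ 2) (z : M × M) :
    traceZeroBlockMap a b c (traceZeroBlockMap a b c z) = -z := by
  have hba : b * a = 1 + c * c := by rw [← hab.eq, h, sq]
  ext
  · calc -(c • (-(c • z.1) - b • z.2)) - b • (a • z.1 + c • z.2)
        = (c * c - b * a) • z.1 + (c * b - b * c) • z.2 := by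
          simp only [smul_sub, smul_add, smul_neg, sub_smul, mul_smul]; abel
      _ = -z.1 := by simp [hba, hbc.eq]
  · calc a • (-(c • z.1) - b • z.2) + c • (a • z.1 + c • z.2)
        = (c * a - a * c) • z.1 + (c * c - a * b) • z.2 := by
          simp only [smul_sub, smul_add, smul_neg, sub_smul, mul_smul]; abel
      _ = -z.2 := by simp [h, hac.eq, sq]

end BlockMap

section ScalarAddSMul

variable {R A : Type*} [CommSemiring R] [Semiring A] [Algebra R A]

theorem commute_smul_one_add_smul (T : A) (a b a' b' : R) :
    Commute (a • (1 : A) + b • T) (a' • (1 : A) + b' • T) :=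
  .add_left ((Commute.one_left _).smul_left a)
    ((Commute.add_right ((Commute.one_right T).smul_right a')
      ((Commute.refl T).smul_right b')).smul_left b)

theorem smul_one_add_smul_mul {T : A} {s : R} (hT : T * T = s • T) (a b a' b' : R) :
    (a • (1 : A) + b • T) * (a' • (1 : A) + b' • T) =
      (a * a') • (1 : A) + (a * b' + b * a' + s * b * b') • T := by
  simp only [add_mul, mul_add, smul_mul_smul_comm, one_mul, mul_one, hT]
  module

theorem smul_one_add_smul_mul_eq_one_add_sq {K A : Type*} [Field K] [Ring A] [Algebra K A]
    {T : A} {s : K} (hT : T * T = s • T) (hs : s = 0 → T = 0) {a₁ a₂ a₃ b₁ b₂ b₃ : K}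
    (h₀ : a₁ * a₂ = 1 + a₃ ^ 2)
    (hₛ : (a₁ + s * b₁) * (a₂ + s * b₂) = 1 + (a₃ + s * b₃) ^ 2) :
    (a₁ • (1 : A) + b₁ • T) * (a₂ • (1 : A) + b₂ • T) =
      1 + (a₃ • (1 : A) + b₃ • T) ^ 2 := by
  have hcoeff : (a₁ * b₂ + b₁ * a₂ + s * b₁ * b₂) • T =
      (a₃ * b₃ + b₃ * a₃ + s * b₃ * b₃) • T := by
    rcases eq_or_ne s 0 with h | h
    · simp only [hs h, smul_zero]
    · congr 1
      apply mul_left_cancel₀ h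
      linear_combination hₛ - h₀
  rw [sq, smul_one_add_smul_mul hT, smul_one_add_smul_mul hT, hcoeff, h₀]
  module

end ScalarAddSMul

theorem smulRight_mul_self {R M : Type*} [CommSemiring R] [AddCommMonoid M] [Module R M]
    (φ : Module.Dual R M) (p : M) :
    (φ.smulRight p * φ.smulRight p : Module.End R M) = φ p • φ.smulRight p := by
  ext x
  simp [smul_smul, mul_comm]

theorem almost_complex_of_coeff_relations_general
    {K V : Type*} [Field K] [AddCommGroup V] [Module K V]
    (φ : Module.Dual K V) (p : V) (hp : φ p = 0 → φ = 0 ∨ p = 0)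
    (a₁ a₂ a₃ b₁ b₂ b₃ s : K) (hs : s = φ p)
    (h₀ : a₁ * a₂ = 1 + a₃ ^ 2)
    (hₛ : (a₁ + s * b₁) * (a₂ + s * b₂) = 1 + (a₃ + s * b₃) ^ 2)
    (J : V × V → V × V)
    (hJ : ∀ X θ : V, J (X, θ) =
      (-(a₃ • X) - (b₃ * φ X) • p - a₂ • θ - (b₂ * φ θ) • p,
       a₁ • X + (b₁ * φ X) • p + a₃ • θ + (b₃ * φ θ) • p)) (ξ : V × V) :
    J (J ξ) = -ξ := by
  subst hs
  let T : Module.End K V := φ.smulRight p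
  have hT_zero : φ p = 0 → T = 0 := fun h ↦ LinearMap.smulRight_apply_eq_zero_iff.mpr (hp h)
  have hJ_block : J = traceZeroBlockMap (a₁ • (1 : Module.End K V) + b₁ • T)
      (a₂ • (1 : Module.End K V) + b₂ • T) (a₃ • (1 : Module.End K V) + b₃ • T) := by
    funext ⟨X, θ⟩
    rw [hJ]
    ext <;> simp only [traceZeroBlockMap, T, add_smul, smul_assoc, one_smul,
      LinearMap.smulRight_apply, Module.End.smul_def, smul_smul] <;> abel
  rw [hJ_block]
  exact traceZeroBlockMap_traceZeroBlockMap (commute_smul_one_add_smul ..)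
    (commute_smul_one_add_smul ..) (commute_smul_one_add_smul ..)
    (smul_one_add_smul_mul_eq_one_add_sq (smulRight_mul_self φ p) hT_zero h₀ hₛ) ξ

/-- Fibrewise sufficiency part of Theorem 2.1 (with `a₄ = -a₃`, `b₄ = -b₃`
substituted): under the coefficient relations, `J ∘ J = -id`. -/
theorem almost_complex_of_coeff_relations
    {V : Type*} [NormedAddCommGroup V] [InnerProductSpace ℝ V]
    [FiniteDimensional ℝ V]
    (p : V) (a₁ a₂ a₃ b₁ b₂ b₃ t : ℝ) (ht : t = ‖p‖ ^ 2 / 2)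
    (h1 : a₁ * a₂ = 1 + a₃ ^ 2)
    (h2 : (a₁ + 2 * t * b₁) * (a₂ + 2 * t * b₂) = 1 + (a₃ + 2 * t * b₃) ^ 2)
    (J : V × V → V × V)
    (hJ : ∀ X θ : V, J (X, θ) =
      (-(a₃ • X) - (b₃ * ⟪p, X⟫) • p - a₂ • θ - (b₂ * ⟪p, θ⟫) • p,
       a₁ • X + (b₁ * ⟪p, X⟫) • p + a₃ • θ + (b₃ * ⟪p, θ⟫) • p)) :
    ∀ ξ : V × V, J (J ξ) = -ξ := by
  have hs : 2 * t = innerₛₗ ℝ p p := by simp [ht, mul_div_cancel₀]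
  exact almost_complex_of_coeff_relations_general (innerₛₗ ℝ p) p
    (fun h ↦ .inr (inner_self_eq_zero.mp h)) a₁ a₂ a₃ b₁ b₂ b₃ (2 * t) hs h1 h2 J hJ
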